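/- Let N, s, M be natural numbers with N = s·M and s, M > 0, let π : ZMod N → ZMod M be the reduction homomorphism, let B ⊆ ZMod N be a transversal for π with section β : ZMod M → ZMod N, and let σ : ZMod N → ℂ satisfy 𝓕_N σ = s·1_B. Then for h : ZMod M → ℂ and H : ZMod N → ℂ, the equivalent-kernel condition h = ↓_s(σ ⋆ H) holds if and only if 𝓕_M h (k) = 𝓕_N H (β k) for every k : ZMod M; in particular, only the values of the DFT of H on the band B determine whether H is an equivalent high-resolution kernel for h. -/

import Mathlib

open ZMod Finset

noncomputable section

/-- Circular convolution on `ZMod N`: `(f ⋆ g)(n) = ∑ m, f m * g (n - m)`. -/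
def cconv {N : ℕ} [NeZero N] (f g : ZMod N → ℂ) : ZMod N → ℂ :=
  fun n => ∑ m : ZMod N, f m * g (n - m)

/-- Decimation operator `↓_s : (ZMod N → ℂ) → (ZMod M → ℂ)`, `(↓_s f)(k) = f (s * k.val)`. -/
def decim (N M s : ℕ) (f : ZMod N → ℂ) : ZMod M → ℂ :=
  fun k => f ((s * k.val : ℕ) : ZMod N)

/-- `B` is a transversal for `π`: each fiber of `π` contains exactly one element of `B`. -/
def IsTransversal {N M : ℕ} (π : ZMod N → ZMod M) (B : Set (ZMod N)) : Prop :=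
  ∀ k : ZMod M, ∃! x : ZMod N, x ∈ B ∧ π x = k

theorem dft_cconv_aux {N : ℕ} [NeZero N] (f g : ZMod N → ℂ) (k : ZMod N) :
    𝓕 (cconv f g) k = 𝓕 f k * 𝓕 g k := by
  simp only [dft_apply, cconv, smul_eq_mul]
  rw [Finset.sum_mul]
  simp only [Finset.mul_sum]
  rw [Finset.sum_comm]
  refine Finset.sum_congr rfl fun m _ => ?_
  rw [← Equiv.sum_comp (Equiv.addRight m)]
  refine Finset.sum_congr rfl fun j _ => ?_
  have : -((j + m) * k) = -(m * k) + -(j * k) := by ring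
  simp only [Equiv.coe_addRight, add_sub_cancel_right]
  rw [this, AddChar.map_add_eq_mul]
  ring

theorem char_aux (N s M : ℕ) [NeZero N] [NeZero M] (hN : N = s * M) (hd : M ∣ N)
    (x : ZMod N) (j : ZMod M) :
    stdAddChar (x * ((s * j.val : ℕ) : ZMod N)) =
      stdAddChar (ZMod.castHom hd (ZMod M) x * j) := by
  have h1 : x * ((s * j.val : ℕ) : ZMod N) = (((x.val * (s * j.val) : ℕ) : ℤ) : ZMod N) := by
    push_cast
    simp
  have h2 : ZMod.castHom hd (ZMod M) x * j = (((x.val * j.val : ℕ) : ℤ) : ZMod M) := by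
    push_cast
    simp [ZMod.natCast_val]
  rw [h1, h2, stdAddChar_coe, stdAddChar_coe]
  congr 1
  have hMc : (M : ℂ) ≠ 0 := by exact_mod_cast NeZero.ne M
  have hsc : (s : ℂ) ≠ 0 := by
    rintro h0
    have : s = 0 := by exact_mod_cast h0
    exact NeZero.ne N (by simp [hN, this])
  have hNc : (N : ℂ) = s * M := by rw [hN]; push_cast; rfl
  push_cast
  rw [hNc]
  field_simp

/-- The equivalent-kernel condition `h = ↓_s (σ ⋆ H)` holds iff the DFT of `h` agrees with
the DFT of `H` on the band `B` (via the section `β`). -/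
theorem equivalent_kernel_iff (N s M : ℕ) [NeZero N] [NeZero M]
    (hs : 0 < s) (hM : 0 < M) (hN : N = s * M)
    (B : Set (ZMod N))
    (hB : IsTransversal (ZMod.castHom (show M ∣ N from ⟨s, by rw [hN]; ring⟩) (ZMod M)) B)
    (β : ZMod M → ZMod N)
    (hβ : ∀ k : ZMod M, β k ∈ B ∧
      ZMod.castHom (show M ∣ N from ⟨s, by rw [hN]; ring⟩) (ZMod M) (β k) = k)
    (σ : ZMod N → ℂ)
    (hσ : ∀ m : ZMod N, 𝓕 σ m = (s : ℂ) * Set.indicator B (1 : ZMod N → ℂ) m)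
    (h : ZMod M → ℂ) (H : ZMod N → ℂ) :
    h = decim N M s (cconv σ H) ↔ ∀ k : ZMod M, 𝓕 h k = 𝓕 H (β k) := by
  have hd : M ∣ N := ⟨s, by rw [hN]; ring⟩
  have hMc : (M : ℂ) ≠ 0 := by exact_mod_cast NeZero.ne M
  have hsc : (s : ℂ) ≠ 0 := by exact_mod_cast hs.ne'
  have hNc : (N : ℂ) = s * M := by rw [hN]; push_cast; rfl
  have hinj : Function.Injective β := fun a b hab => by
    rw [← (hβ a).2, ← (hβ b).2, hab]
  have hBr : ∀ x, x ∈ B ↔ x ∈ Set.range β := by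
    intro x
    constructor
    · intro hx
      refine ⟨_, (hB (ZMod.castHom hd (ZMod M) x)).unique (hβ _) ⟨hx, rfl⟩⟩
    · rintro ⟨k, rfl⟩
      exact (hβ k).1
  have key : decim N M s (cconv σ H) = 𝓕⁻ (fun k => 𝓕 H (β k)) := by
    funext j
    have hg : cconv σ H = 𝓕⁻ (𝓕 (cconv σ H)) := (dft.symm_apply_apply _).symm
    unfold decim
    rw [hg, invDFT_apply, invDFT_apply]
    simp only [dft_cconv_aux, hσ, smul_eq_mul]
    have : ∑ k : ZMod M, stdAddChar (k * j) * 𝓕 H (β k) =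
        ∑ x : ZMod N, stdAddChar (x * ((s * j.val : ℕ) : ZMod N)) *
          (Set.indicator B (1 : ZMod N → ℂ) x * 𝓕 H x) := by
      refine Finset.sum_of_injOn β hinj.injOn (by simp) ?_ ?_
      · intro x _ hx
        have : x ∉ B := by
          rw [hBr]
          simpa using hx
        simp [this]
      · intro k _
        rw [char_aux N s M hN hd, (hβ k).2]
        simp [(hβ k).1]
    rw [this, Finset.mul_sum, Finset.mul_sum]
    refine Finset.sum_congr rfl fun x _ => ?_
    rw [hNc]
    field_simp
  rw [key]
  constructor
  · rintro rfl k
    exact congrFun (dft.apply_symm_apply _) k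
  · intro hk
    rw [← funext hk]
    exact (dft.symm_apply_apply _).symm

end
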